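/- NGr is a category: with objects the nested graphs, morphisms the pairs (μ, κ) of a merger μ followed by a contraction κ (up to shifting an isomorphism between the two factors), composition defined by (κ₂, μ₂) ∘ (κ₁, μ₁) = (κ₂ ∘ κ', μ' ∘ μ₁) where κ' ∘ μ' is the canonical merger–contraction decomposition of μ₂ ∘ κ₁, and identities the pairs of identity functors, this composition is associative and unital. -/

import Mathlib

open CategoryTheory

universe v u

/-- A morphism in a category is an identity morphism (up to `eqToHom`). -/
def IsId {C : Type u} [Category.{v} C] {A B : C} (f : A ⟶ B) : Prop :=
  ∃ h : A = B, f = eqToHom h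

/-- A flag in a nested graph is a non-identity morphism. -/
def IsFlag {C : Type u} [Category.{v} C] {A B : C} (f : A ⟶ B) : Prop :=
  ¬ IsId f

/-- An irreducible flag is a flag that cannot be written as the composite of two flags. -/
def IsIrred {C : Type u} [Category.{v} C] {A B : C} (f : A ⟶ B) : Prop :=
  IsFlag f ∧ ¬ ∃ (X : C) (g : A ⟶ X) (h : X ⟶ B), IsFlag g ∧ IsFlag h ∧ g ≫ h = f

/-- A grading: a functor to the finite ordinal `Fin n` (viewed as a preorder category)
sending every non-identity morphism to a non-identity morphism. -/
def IsGrading {C : Type u} [Category.{v} C] {n : ℕ} (G : C ⥤ Fin n) : Prop :=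
  ∀ ⦃A B : C⦄ (f : A ⟶ B), IsFlag f → IsFlag (G.map f)

/-- A nested graph: a category admitting a grading into some finite ordinal. -/
def IsNestedGraph (C : Type u) [Category.{v} C] : Prop :=
  ∃ (n : ℕ) (G : C ⥤ Fin n), IsGrading G

/-- A functor `φ` contracts a flag `f` if `φ.map f` is an identity. -/
def Contracts {C D : Type u} [Category.{v} C] [Category.{v} D]
    (φ : C ⥤ D) {A B : C} (f : A ⟶ B) : Prop :=
  IsId (φ.map f)

/-- An admissible functor: it maps irreducible flags to identities or irreducible flags,
and whenever it contracts an irreducible flag with domain `A`, it contracts every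
irreducible flag with domain `A`. -/
def IsAdmissible {C D : Type u} [Category.{v} C] [Category.{v} D] (φ : C ⥤ D) : Prop :=
  (∀ ⦃A B : C⦄ (f : A ⟶ B), IsIrred f → IsId (φ.map f) ∨ IsIrred (φ.map f)) ∧
  (∀ ⦃A B B' : C⦄ (f : A ⟶ B) (g : A ⟶ B'), IsIrred f → IsIrred g →
      Contracts φ f → Contracts φ g)

/-- The morphisms of the codomain generated by the image of a functor. -/
inductive GenBy {C D : Type u} [Category.{v} C] [Category.{v} D] (φ : C ⥤ D) :
    ∀ {X Y : D}, (X ⟶ Y) → Prop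
  | id (X : D) : GenBy φ (𝟙 X)
  | map {A B : C} (f : A ⟶ B) : GenBy φ (φ.map f)
  | comp {X Y Z : D} (f : X ⟶ Y) (g : Y ⟶ Z) :
      GenBy φ f → GenBy φ g → GenBy φ (f ≫ g)

/-- An epi-functor: its image generates the codomain. -/
def IsEpiFunctor {C D : Type u} [Category.{v} C] [Category.{v} D] (φ : C ⥤ D) : Prop :=
  Function.Surjective φ.obj ∧ ∀ ⦃X Y : D⦄ (f : X ⟶ Y), GenBy φ f

/-- `μ : C ⥤ D` exhibits `D` as the quotient of `C` identifying `r`-related objects,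
with morphisms freely generated by the morphisms of `C` subject to the composition
relations of `C` (expressed via the universal property). -/
def IsQuotientBy {C D : Type u} [Category.{v} C] [Category.{v} D]
    (r : C → C → Prop) (μ : C ⥤ D) : Prop :=
  (∀ A B : C, μ.obj A = μ.obj B ↔ Relation.EqvGen r A B) ∧
  Function.Surjective μ.obj ∧
  (∀ ⦃X Y : D⦄ (f : X ⟶ Y), GenBy μ f) ∧
  (∀ (E : Type u) [Category.{v} E] (F : C ⥤ E),
      (∀ A B : C, r A B → F.obj A = F.obj B) → ∃! F' : D ⥤ E, μ ⋙ F' = F)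

/-- A merger: an admissible epi-functor exhibiting its codomain as the quotient of its
domain by an equivalence relation on objects, with morphisms freely generated subject to
the composition relations of the domain. -/
def IsMerger {C D : Type u} [Category.{v} C] [Category.{v} D] (μ : C ⥤ D) : Prop :=
  IsAdmissible μ ∧ IsEpiFunctor μ ∧
    ∃ r : C → C → Prop, Equivalence r ∧ IsQuotientBy r μ

/-- `A` is a vertex of its fiber under `φ`: it is not the domain of any flag
contracted by `φ`. -/
def IsVertexOver {C D : Type u} [Category.{v} C] [Category.{v} D]
    (φ : C ⥤ D) (A : C) : Prop :=
  ∀ ⦃B : C⦄ (f : A ⟶ B), Contracts φ f → IsId f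

/-- `A₁` is a vertex of the fiber of `φ` over `A₂`. -/
def IsFiberVertex {C D : Type u} [Category.{v} C] [Category.{v} D]
    (φ : C ⥤ D) (A₂ : D) (A₁ : C) : Prop :=
  φ.obj A₁ = A₂ ∧ IsVertexOver φ A₁

/-- A contraction: an admissible epi-functor each of whose fibers is a corolla,
i.e. has a unique vertex. -/
def IsContraction {C D : Type u} [Category.{v} C] [Category.{v} D] (κ : C ⥤ D) : Prop :=
  IsAdmissible κ ∧ IsEpiFunctor κ ∧ ∀ A₂ : D, ∃! A₁ : C, IsFiberVertex κ A₂ A₁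

/-- The canonical merger relation of `φ`: it relates distinct objects `A ≠ B` exactly when
`φ A = φ B` and both `A` and `B` are vertices of the fiber of `φ` over `φ A`. -/
def mergerRel {C D : Type u} [Category.{v} C] [Category.{v} D] (φ : C ⥤ D) :
    C → C → Prop :=
  fun A B => A ≠ B ∧ φ.obj A = φ.obj B ∧ IsVertexOver φ A ∧ IsVertexOver φ B

/-- A canonical merger–contraction decomposition of `φ`: the merger part is the quotient
of the domain identifying, within each fiber of `φ`, all objects that are vertices of that
fiber. -/
def IsCanonicalDecomp {C P D : Type u} [Category.{v} C] [Category.{v} P] [Category.{v} D]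
    (φ : C ⥤ D) (μ : C ⥤ P) (κ : P ⥤ D) : Prop :=
  IsQuotientBy (mergerRel φ) μ ∧ μ ⋙ κ = φ

/-- Two merger–contraction pairs are equal as morphisms of nested graphs: one is obtained
from the other by shifting an isomorphism from the merger to the contraction. -/
def PairEquiv {A B P P' : Type u} [Category.{v} A] [Category.{v} B]
    [Category.{v} P] [Category.{v} P']
    (μ : A ⥤ P) (κ : P ⥤ B) (μ' : A ⥤ P') (κ' : P' ⥤ B) : Prop :=
  ∃ (e : P ⥤ P') (e' : P' ⥤ P), e ⋙ e' = 𝟭 P ∧ e' ⋙ e = 𝟭 P' ∧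
    μ ⋙ e = μ' ∧ e ⋙ κ' = κ

/-- A category contains no cycle of flags. -/
def NoFlagCycles (C : Type u) [Category.{v} C] : Prop :=
  ∀ (k : ℕ), 0 < k → ∀ (obj : Fin (k + 1) → C)
    (flag : ∀ i : Fin k, obj i.castSucc ⟶ obj i.succ),
    (∀ i, IsFlag (flag i)) → obj 0 ≠ obj (Fin.last k)

theorem IsId.id {C : Type u} [Category.{v} C] (A : C) : IsId (𝟙 A) := ⟨rfl, rfl⟩

theorem IsId.comp {C : Type u} [Category.{v} C] {X Y Z : C} {f : X ⟶ Y} {g : Y ⟶ Z}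
    (hf : IsId f) (hg : IsId g) : IsId (f ≫ g) := by
  obtain ⟨rfl, rfl⟩ := hf
  obtain ⟨rfl, rfl⟩ := hg
  exact ⟨rfl, by simp⟩

theorem IsId.map {C D : Type u} [Category.{v} C] [Category.{v} D] (φ : C ⥤ D)
    {X Y : C} {f : X ⟶ Y} (hf : IsId f) : IsId (φ.map f) := by
  obtain ⟨rfl, rfl⟩ := hf
  exact ⟨rfl, by simp⟩

/-- A nested graph carries a natural-number degree which weakly increases along morphisms
and is constant only along identities. -/
theorem IsNestedGraph.exists_degree {C : Type u} [Category.{v} C] (hC : IsNestedGraph C) :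
    ∃ d : C → ℕ, (∀ ⦃A B : C⦄, (A ⟶ B) → d A ≤ d B) ∧
      ∀ ⦃A B : C⦄ (f : A ⟶ B), d A = d B → IsId f := by
  obtain ⟨n, G, hG⟩ := hC
  refine ⟨fun A => (G.obj A).val, fun A B f => leOfHom (G.map f), fun A B f h => ?_⟩
  by_contra hf
  exact hG f hf ⟨Fin.ext h, Subsingleton.elim _ _⟩

theorem IsNestedGraph.isId_of_comp {C : Type u} [Category.{v} C] (hC : IsNestedGraph C)
    {X Y Z : C} {f : X ⟶ Y} {g : Y ⟶ Z} (h : IsId (f ≫ g)) : IsId f ∧ IsId g := by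
  obtain ⟨d, hle, hid⟩ := hC.exists_degree
  obtain ⟨rfl, -⟩ := h
  have h₁ := hle f
  have h₂ := hle g
  exact ⟨hid f (by omega), hid g (by omega)⟩

/-- Every flag of a nested graph starts with an irreducible flag. -/
theorem IsNestedGraph.exists_irred_factor {C : Type u} [Category.{v} C]
    (hC : IsNestedGraph C) {A B : C} (f : A ⟶ B) (hf : IsFlag f) :
    ∃ (X : C) (g : A ⟶ X) (h : X ⟶ B), IsIrred g ∧ g ≫ h = f := by
  obtain ⟨d, hle, hid⟩ := hC.exists_degree
  induction hn : d B using Nat.strong_induction_on generalizing B with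
  | _ n ih =>
    by_cases hirr : IsIrred f
    · exact ⟨B, f, 𝟙 B, hirr, Category.comp_id f⟩
    · obtain ⟨X, g, h, hg, hh, rfl⟩ : ∃ (X : C) (g : A ⟶ X) (h : X ⟶ B),
          IsFlag g ∧ IsFlag h ∧ g ≫ h = f := by
        by_contra hne
        exact hirr ⟨hf, hne⟩
      have hlt : d X < d B := lt_of_le_of_ne (hle h) fun he => hh (hid h he)
      obtain ⟨Y, a, b, ha, rfl⟩ := ih (d X) (hn ▸ hlt) g hg rfl
      exact ⟨Y, a, b ≫ h, ha, by simp⟩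

/-- The image under an admissible functor of a morphism is also the image of a morphism
whose domain is a vertex of the fiber, unless it is an identity. -/
theorem IsAdmissible.exists_lift_from_vertex {C D : Type u} [Category.{v} C] [Category.{v} D]
    {φ : C ⥤ D} (hφ : IsAdmissible φ) (hC : IsNestedGraph C) (hD : IsNestedGraph D)
    {A B : C} (f : A ⟶ B) (hf : IsFlag (φ.map f)) :
    ∃ (A' : C) (f' : A' ⟶ B) (e : φ.obj A = φ.obj A'),
      IsVertexOver φ A' ∧ φ.map f = eqToHom e ≫ φ.map f' := by
  obtain ⟨d, hle, hid⟩ := hC.exists_degree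
  induction hn : d B - d A using Nat.strong_induction_on generalizing A with
  | _ n ih =>
    by_cases hA : IsVertexOver φ A
    · exact ⟨A, f, rfl, hA, by simp⟩
    · simp only [IsVertexOver, not_forall] at hA
      obtain ⟨Z, g, hgc, hg⟩ := hA
      obtain ⟨Y, g₁, g₂, hg₁, rfl⟩ := hC.exists_irred_factor g hg
      obtain ⟨X, f₁, f₂, hf₁, rfl⟩ := hC.exists_irred_factor f fun h => hf (h.map φ)
      rw [Contracts, φ.map_comp] at hgc
      have hc : IsId (φ.map f₁) := hφ.2 g₁ f₁ hg₁ hf₁ (hD.isId_of_comp hgc).1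
      have hlt : d A < d X := lt_of_le_of_ne (hle f₁) fun he => hf₁.1 (hid f₁ he)
      have hXB := hle f₂
      rw [φ.map_comp] at hf
      obtain ⟨A', f', e, hA', hf'⟩ :=
        ih (d B - d X) (by omega) f₂ (fun h => hf (hc.comp h)) rfl
      obtain ⟨e₁, he₁⟩ := hc
      exact ⟨A', f', e₁.trans e, hA', by simp [he₁, hf']⟩

theorem IsAdmissible.comp {C D E : Type u} [Category.{v} C] [Category.{v} D] [Category.{v} E]
    {φ : C ⥤ D} {ψ : D ⥤ E} (hφ : IsAdmissible φ) (hψ : IsAdmissible ψ) :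
    IsAdmissible (φ ⋙ ψ) := by
  refine ⟨fun A B f hf => ?_, fun A B B' f g hf hg hc => ?_⟩
  · rcases hφ.1 f hf with h | h
    · exact Or.inl (h.map ψ)
    · exact hψ.1 _ h
  · rcases hφ.1 g hg with h | h
    · exact h.map ψ
    · rcases hφ.1 f hf with h' | h'
      · exact (hφ.2 f g hf hg h').map ψ
      · exact hψ.2 _ _ h' h hc

theorem GenBy.comp_map {C D E : Type u} [Category.{v} C] [Category.{v} D] [Category.{v} E]
    {φ : C ⥤ D} (ψ : D ⥤ E) {X Y : D} {f : X ⟶ Y} (hf : GenBy φ f) :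
    GenBy (φ ⋙ ψ) (ψ.map f) := by
  induction hf with
  | id X => rw [ψ.map_id]; exact GenBy.id _
  | map f => exact GenBy.map (φ := φ ⋙ ψ) f
  | comp f g _ _ h₁ h₂ => rw [ψ.map_comp]; exact GenBy.comp _ _ h₁ h₂

theorem IsEpiFunctor.comp {C D E : Type u} [Category.{v} C] [Category.{v} D] [Category.{v} E]
    {φ : C ⥤ D} {ψ : D ⥤ E} (hφ : IsEpiFunctor φ) (hψ : IsEpiFunctor ψ) :
    IsEpiFunctor (φ ⋙ ψ) := by
  refine ⟨hψ.1.comp hφ.1, fun X Y f => ?_⟩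
  induction hψ.2 f with
  | id X => exact GenBy.id _
  | map f => exact (hφ.2 f).comp_map ψ
  | comp f g _ _ h₁ h₂ => exact GenBy.comp _ _ h₁ h₂

/-- A generated flag starts with the image of a morphism that is not contracted. -/
theorem GenBy.exists_head {C D : Type u} [Category.{v} C] [Category.{v} D] {φ : C ⥤ D}
    {X Y : D} {f : X ⟶ Y} (hf : GenBy φ f) (hflag : IsFlag f) :
    ∃ (A B : C) (h : A ⟶ B) (e : X = φ.obj A) (k : φ.obj B ⟶ Y),
      IsFlag (φ.map h) ∧ f = eqToHom e ≫ φ.map h ≫ k := by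
  induction hf with
  | id X => exact absurd (IsId.id X) hflag
  | map f => exact ⟨_, _, f, rfl, 𝟙 _, hflag, by simp⟩
  | comp f g _ _ h₁ h₂ =>
    by_cases hf : IsId f
    · obtain ⟨rfl, rfl⟩ := hf
      obtain ⟨A, B, h, e, k, hh, hk⟩ := h₂ fun hg => hflag ((IsId.id _).comp hg)
      exact ⟨A, B, h, e, k, hh, by simp [hk]⟩
    · obtain ⟨A, B, h, e, k, hh, hk⟩ := h₁ hf
      exact ⟨A, B, h, e, k ≫ g, hh, by simp [hk]⟩

/-- A functor is universal among the functors identifying the objects it identifies. -/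
def IsUniversalQuotient {C D : Type u} [Category.{v} C] [Category.{v} D] (μ : C ⥤ D) : Prop :=
  ∀ (E : Type u) [Category.{v} E] (F : C ⥤ E),
    (∀ A B : C, μ.obj A = μ.obj B → F.obj A = F.obj B) → ∃! F' : D ⥤ E, μ ⋙ F' = F

theorem IsQuotientBy.isUniversalQuotient {C D : Type u} [Category.{v} C] [Category.{v} D]
    {r : C → C → Prop} {μ : C ⥤ D} (h : IsQuotientBy r μ) : IsUniversalQuotient μ :=
  fun E _ F hF => h.2.2.2 E F fun A B hr => hF A B ((h.1 A B).2 (Relation.EqvGen.rel _ _ hr))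

theorem IsUniversalQuotient.id (C : Type u) [Category.{v} C] : IsUniversalQuotient (𝟭 C) :=
  fun _ _ F _ => ⟨F, rfl, fun _ h => h⟩

theorem IsUniversalQuotient.comp {C D E : Type u} [Category.{v} C] [Category.{v} D]
    [Category.{v} E] {μ : C ⥤ D} {ν : D ⥤ E} (hμ : IsUniversalQuotient μ)
    (hs : Function.Surjective μ.obj) (hν : IsUniversalQuotient ν) :
    IsUniversalQuotient (μ ⋙ ν) := by
  intro E' _ F hF
  obtain ⟨F₁, rfl, hu₁⟩ := hμ E' F fun A B h => hF A B (congrArg ν.obj h)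
  obtain ⟨F₂, rfl, hu₂⟩ := hν E' F₁ fun X Y h => by
    obtain ⟨A, rfl⟩ := hs X
    obtain ⟨B, rfl⟩ := hs Y
    exact hF A B h
  exact ⟨F₂, rfl, fun F' h => hu₂ F' (hu₁ (ν ⋙ F') h)⟩

theorem IsUniversalQuotient.cancel {C D E : Type u} [Category.{v} C] [Category.{v} D]
    [Category.{v} E] {μ : C ⥤ D} (hμ : IsUniversalQuotient μ) {F G : D ⥤ E}
    (h : μ ⋙ F = μ ⋙ G) : F = G :=
  (hμ E (μ ⋙ G) fun _ _ e => congrArg G.obj e).unique h rfl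

theorem IsUniversalQuotient.exists_iso {C D D' : Type u} [Category.{v} C] [Category.{v} D]
    [Category.{v} D'] {μ : C ⥤ D} {μ' : C ⥤ D'} (hμ : IsUniversalQuotient μ)
    (hμ' : IsUniversalQuotient μ')
    (h : ∀ A B : C, μ.obj A = μ.obj B ↔ μ'.obj A = μ'.obj B) :
    ∃ (e : D ⥤ D') (e' : D' ⥤ D), e ⋙ e' = 𝟭 D ∧ e' ⋙ e = 𝟭 D' ∧ μ ⋙ e = μ' := by
  obtain ⟨e, he, -⟩ := hμ D' μ' fun A B => (h A B).1
  obtain ⟨e', he', -⟩ := hμ' D μ fun A B => (h A B).2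
  refine ⟨e, e', hμ.cancel ?_, hμ'.cancel ?_, he⟩
  · rw [← Functor.assoc, he, he', Functor.comp_id]
  · rw [← Functor.assoc, he', he, Functor.comp_id]

theorem eqvGen_mergerRel_iff {C D : Type u} [Category.{v} C] [Category.{v} D] (φ : C ⥤ D)
    (A B : C) : Relation.EqvGen (mergerRel φ) A B ↔
      A = B ∨ (φ.obj A = φ.obj B ∧ IsVertexOver φ A ∧ IsVertexOver φ B) := by
  constructor
  · intro h
    induction h with
    | rel A B h => exact Or.inr h.2
    | refl A => exact Or.inl rfl
    | symm A B _ h => exact h.imp Eq.symm fun ⟨e, hA, hB⟩ => ⟨e.symm, hB, hA⟩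
    | trans A B C _ _ h₁ h₂ =>
      rcases h₁ with rfl | ⟨e, hA, hB⟩
      · exact h₂
      · rcases h₂ with rfl | ⟨e', -, hC⟩
        · exact Or.inr ⟨e, hA, hB⟩
        · exact Or.inr ⟨e.trans e', hA, hC⟩
  · rintro (rfl | h)
    · exact Relation.EqvGen.refl A
    · by_cases hAB : A = B
      · exact hAB ▸ Relation.EqvGen.refl A
      · exact Relation.EqvGen.rel _ _ ⟨hAB, h⟩

section CanonicalDecomp

variable {C P D : Type u} [Category.{v} C] [Category.{v} P] [Category.{v} D]
  {φ : C ⥤ D} {μ : C ⥤ P} {κ : P ⥤ D}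

theorem IsCanonicalDecomp.obj_eq_iff (h : IsCanonicalDecomp φ μ κ) (A B : C) :
    μ.obj A = μ.obj B ↔
      A = B ∨ (φ.obj A = φ.obj B ∧ IsVertexOver φ A ∧ IsVertexOver φ B) :=
  (h.1.1 A B).trans (eqvGen_mergerRel_iff φ A B)

/-- The merger part of a canonical decomposition contracts no flags. -/
theorem IsCanonicalDecomp.isId_of_contracts (h : IsCanonicalDecomp φ μ κ)
    (hC : IsNestedGraph C) {A B : C} {f : A ⟶ B} (hf : Contracts μ f) : IsId f := by
  rcases (h.obj_eq_iff A B).1 hf.choose with rfl | ⟨-, hA, -⟩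
  · obtain ⟨d, -, hid⟩ := hC.exists_degree
    exact hid f rfl
  · refine hA f ?_
    rw [← h.2]
    exact hf.map κ

/-- Under the merger part, vertices are sent to vertices of the contraction part. -/
theorem IsCanonicalDecomp.isVertexOver_obj (h : IsCanonicalDecomp φ μ κ)
    (hD : IsNestedGraph D) {A : C} (hA : IsVertexOver φ A) : IsVertexOver κ (μ.obj A) := by
  intro Y f hf
  by_contra hflag
  obtain ⟨A', B', g, e, k, hg, rfl⟩ := (h.1.2.2.1 f).exists_head hflag
  have hA' : IsVertexOver φ A' := by
    rcases (h.obj_eq_iff A A').1 e with rfl | ⟨-, -, h'⟩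
    · exact hA
    · exact h'
  have hc : Contracts φ g := by
    rw [Contracts, κ.map_comp, κ.map_comp] at hf
    have := (hD.isId_of_comp (hD.isId_of_comp hf).2).1
    rw [← h.2]
    exact this
  exact hg ((hA' g hc).map μ)

end CanonicalDecomp

/-- The category with one object and endomorphism monoid the additive naturals. -/
def DegreeCategory : Type u := PUnit

instance : Category.{v} DegreeCategory.{u} where
  Hom _ _ := ULift ℕ
  id _ := ⟨0⟩
  comp f g := ⟨f.down + g.down⟩
  id_comp _ := ULift.ext _ _ (Nat.zero_add _)
  comp_id _ := rfl
  assoc _ _ _ := ULift.ext _ _ (Nat.add_assoc _ _ _)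

/-- The functor recording the degree increment of every morphism. -/
def degreeFunctor {C : Type u} [Category.{v} C] (d : C → ℕ)
    (hd : ∀ ⦃A B : C⦄, (A ⟶ B) → d A ≤ d B) : C ⥤ DegreeCategory.{u} where
  obj _ := PUnit.unit
  map {A B} _ := (⟨d B - d A⟩ : ULift.{v} ℕ)
  map_id A := ULift.ext _ _ (Nat.sub_self _)
  map_comp {A B C} f g := ULift.ext _ _ <| by
    have h₁ := hd f
    have h₂ := hd g
    change d C - d A = (d B - d A) + (d C - d B)
    omega

/-- Freeness of the quotient: a merger of a nested graph contracts no flags. -/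
theorem IsQuotientBy.isId_of_contracts {C D : Type u} [Category.{v} C] [Category.{v} D]
    {r : C → C → Prop} {μ : C ⥤ D} (h : IsQuotientBy r μ) (hC : IsNestedGraph C)
    {A B : C} {f : A ⟶ B} (hf : Contracts μ f) : IsId f := by
  obtain ⟨d, hle, hid⟩ := hC.exists_degree
  obtain ⟨F, hF, -⟩ := h.2.2.2 DegreeCategory.{u} (degreeFunctor d hle) fun _ _ _ => rfl
  have hdeg : IsId ((degreeFunctor d hle).map f) := by
    rw [← hF]
    exact hf.map F
  obtain ⟨_, he⟩ := hdeg
  have hsub : d B - d A = 0 := congrArg ULift.down he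
  have := hle f
  exact hid f (by omega)

/-- The two ways of forming a triple composite identify the same objects. -/
theorem IsCanonicalDecomp.comp_obj_eq_iff {X Y Z P₁ P₂ Q₁ Q₂ : Type u}
    [Category.{v} X] [Category.{v} Y] [Category.{v} Z] [Category.{v} P₁] [Category.{v} P₂]
    [Category.{v} Q₁] [Category.{v} Q₂]
    (hX : IsNestedGraph X) (hY : IsNestedGraph Y) (hZ : IsNestedGraph Z)
    {ψ : X ⥤ Y} {θ : Y ⥤ Z} (hadm : IsAdmissible ψ) (hepi : IsEpiFunctor ψ)
    {α₁ : X ⥤ P₁} {β₁ : P₁ ⥤ Y} (h₁ : IsCanonicalDecomp ψ α₁ β₁)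
    {α₂ : P₁ ⥤ P₂} {β₂ : P₂ ⥤ Z} (h₂ : IsCanonicalDecomp (β₁ ⋙ θ) α₂ β₂)
    {γ₁ : Y ⥤ Q₁} {δ₁ : Q₁ ⥤ Z} (k₁ : IsCanonicalDecomp θ γ₁ δ₁)
    {γ₂ : X ⥤ Q₂} {δ₂ : Q₂ ⥤ Q₁} (k₂ : IsCanonicalDecomp (ψ ⋙ γ₁) γ₂ δ₂) (A B : X) :
    (α₁ ⋙ α₂).obj A = (α₁ ⋙ α₂).obj B ↔ γ₂.obj A = γ₂.obj B := by
  have hobj (A : X) : β₁.obj (α₁.obj A) = ψ.obj A := congrArg (fun F => F.obj A) h₁.2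
  have hmap {A B : X} (f : A ⟶ B) (hf : IsId (ψ.map f)) : IsId (β₁.map (α₁.map f)) := by
    rw [← h₁.2] at hf
    exact hf
  have vertex_iff (A : X) : IsVertexOver (ψ ⋙ γ₁) A ↔ IsVertexOver ψ A :=
    ⟨fun h _ f hf => h f (hf.map γ₁), fun h _ f hf => h f (k₁.isId_of_contracts hY hf)⟩
  have vertex_down {A : X} (h : IsVertexOver (β₁ ⋙ θ) (α₁.obj A)) : IsVertexOver ψ A :=
    fun _ f hf => h₁.isId_of_contracts hX (h (α₁.map f) ((hmap f hf).map θ))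
  have vertex_up {A : X} (hA : IsVertexOver ψ A) (hθ : IsVertexOver θ (ψ.obj A)) :
      IsVertexOver (β₁ ⋙ θ) (α₁.obj A) := by
    intro Y' f hf
    rw [← hobj A] at hθ
    exact h₁.isVertexOver_obj hY hA f (hθ (β₁.map f) hf)
  have vertex_image {A : X} (h : IsVertexOver (β₁ ⋙ θ) (α₁.obj A)) :
      IsVertexOver θ (ψ.obj A) := by
    intro Y' g hg
    by_contra hflag
    obtain ⟨A', B', f, e, k, hf, rfl⟩ := (hepi.2 g).exists_head hflag
    obtain ⟨A'', f', e', hA'', hf'⟩ := hadm.exists_lift_from_vertex hX hY f hf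
    rw [Contracts, θ.map_comp, θ.map_comp, hf', θ.map_comp] at hg
    have hc : IsId (θ.map (ψ.map f')) :=
      (hZ.isId_of_comp (hZ.isId_of_comp (hZ.isId_of_comp hg).2).1).2
    have hα : α₁.obj A = α₁.obj A'' :=
      (h₁.obj_eq_iff A A'').2 (Or.inr ⟨e.trans e', vertex_down h, hA''⟩)
    rw [hα] at h
    have hid : IsId (α₁.map f') := by
      refine h _ ?_
      rw [← h₁.2] at hc
      exact hc
    refine hf ?_
    rw [hf']
    exact IsId.comp ⟨e', rfl⟩ ((h₁.isId_of_contracts hX hid).map ψ)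
  constructor
  · intro h
    rw [k₂.obj_eq_iff, vertex_iff, vertex_iff]
    rcases (h₂.obj_eq_iff _ _).1 h with h | ⟨e, hA, hB⟩
    · exact ((h₁.obj_eq_iff A B).1 h).imp_right fun ⟨e, hA, hB⟩ =>
        ⟨congrArg γ₁.obj e, hA, hB⟩
    · refine Or.inr ⟨(k₁.obj_eq_iff _ _).2 (Or.inr ⟨?_, vertex_image hA, vertex_image hB⟩),
        vertex_down hA, vertex_down hB⟩
      rw [← hobj A, ← hobj B]
      exact e
  · intro h
    rw [k₂.obj_eq_iff, vertex_iff, vertex_iff] at h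
    rcases h with rfl | ⟨e, hA, hB⟩
    · rfl
    · rcases (k₁.obj_eq_iff _ _).1 e with e | ⟨e, hθA, hθB⟩
      · exact congrArg α₂.obj ((h₁.obj_eq_iff A B).2 (Or.inr ⟨e, hA, hB⟩))
      · refine (h₂.obj_eq_iff _ _).2 (Or.inr ⟨?_, vertex_up hA hθA, vertex_up hB hθB⟩)
        change θ.obj (β₁.obj _) = θ.obj (β₁.obj _)
        rw [hobj A, hobj B, e]

/-- `NGr` is a category.  Objects are nested graphs, morphisms are pairs
`(μ, κ)` of a merger followed by a contraction (up to shifting an isomorphism between the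
two factors), composition is defined via the canonical merger–contraction decomposition
of the middle composite, and identities are the pairs of identity functors.  The theorem
asserts that this composition is associative and unital (on representing pairs, up to the
defining equivalence of pairs). -/
theorem NGr_is_category :
    -- associativity: given composable morphisms (μ₁,κ₁), (μ₂,κ₂), (μ₃,κ₃) and the
    -- canonical decompositions needed to form both iterated composites, the two
    -- resulting merger–contraction pairs coincide up to shifting an isomorphism.
    (∀ (A B C D X₁ X₂ X₃ P₁ P₂ Q₁ Q₂ : Type u)
      [Category.{v} A] [Category.{v} B] [Category.{v} C] [Category.{v} D]
      [Category.{v} X₁] [Category.{v} X₂] [Category.{v} X₃]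
      [Category.{v} P₁] [Category.{v} P₂] [Category.{v} Q₁] [Category.{v} Q₂],
      IsNestedGraph A → IsNestedGraph B → IsNestedGraph C → IsNestedGraph D →
      IsNestedGraph X₁ → IsNestedGraph X₂ → IsNestedGraph X₃ →
      IsNestedGraph P₁ → IsNestedGraph P₂ → IsNestedGraph Q₁ → IsNestedGraph Q₂ →
      ∀ (μ₁ : A ⥤ X₁) (κ₁ : X₁ ⥤ B) (μ₂ : B ⥤ X₂) (κ₂ : X₂ ⥤ C)
        (μ₃ : C ⥤ X₃) (κ₃ : X₃ ⥤ D),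
      IsMerger μ₁ → IsContraction κ₁ → IsMerger μ₂ → IsContraction κ₂ →
      IsMerger μ₃ → IsContraction κ₃ →
      ∀ (α₁ : X₁ ⥤ P₁) (β₁ : P₁ ⥤ X₂), IsCanonicalDecomp (κ₁ ⋙ μ₂) α₁ β₁ →
      ∀ (α₂ : P₁ ⥤ P₂) (β₂ : P₂ ⥤ X₃), IsCanonicalDecomp (β₁ ⋙ κ₂ ⋙ μ₃) α₂ β₂ →
      ∀ (γ₁ : X₂ ⥤ Q₁) (δ₁ : Q₁ ⥤ X₃), IsCanonicalDecomp (κ₂ ⋙ μ₃) γ₁ δ₁ →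
      ∀ (γ₂ : X₁ ⥤ Q₂) (δ₂ : Q₂ ⥤ Q₁), IsCanonicalDecomp (κ₁ ⋙ μ₂ ⋙ γ₁) γ₂ δ₂ →
      PairEquiv (μ₁ ⋙ α₁ ⋙ α₂) (β₂ ⋙ κ₃) (μ₁ ⋙ γ₂) (δ₂ ⋙ δ₁ ⋙ κ₃)) ∧
    -- left unitality: composing (μ,κ) : A → B with the identity pair of B gives (μ,κ).
    (∀ (A B X P : Type u)
      [Category.{v} A] [Category.{v} B] [Category.{v} X] [Category.{v} P],
      IsNestedGraph A → IsNestedGraph B → IsNestedGraph X → IsNestedGraph P →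
      ∀ (μ : A ⥤ X) (κ : X ⥤ B), IsMerger μ → IsContraction κ →
      ∀ (α : X ⥤ P) (β : P ⥤ B), IsCanonicalDecomp κ α β →
      PairEquiv (μ ⋙ α) β μ κ) ∧
    -- right unitality: composing the identity pair of A with (μ,κ) : A → B gives (μ,κ).
    (∀ (A B X Q : Type u)
      [Category.{v} A] [Category.{v} B] [Category.{v} X] [Category.{v} Q],
      IsNestedGraph A → IsNestedGraph B → IsNestedGraph X → IsNestedGraph Q →
      ∀ (μ : A ⥤ X) (κ : X ⥤ B), IsMerger μ → IsContraction κ →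
      ∀ (α : A ⥤ Q) (β : Q ⥤ X), IsCanonicalDecomp μ α β →
      PairEquiv α (β ⋙ κ) μ κ) := by
  refine ⟨?_, ?_, ?_⟩
  · intro A B C D X₁ X₂ X₃ P₁ P₂ Q₁ Q₂ _ _ _ _ _ _ _ _ _ _ _ _ _ _ _ hX₁ hX₂ hX₃ _ _ _ _
      μ₁ κ₁ μ₂ κ₂ μ₃ κ₃ _ hκ₁ hμ₂ _ _ _ α₁ β₁ h₁ α₂ β₂ h₂ γ₁ δ₁ k₁ γ₂ δ₂ k₂
    have hα : IsUniversalQuotient (α₁ ⋙ α₂) :=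
      h₁.1.isUniversalQuotient.comp h₁.1.2.1 h₂.1.isUniversalQuotient
    obtain ⟨e, e', he, he', heq⟩ := hα.exists_iso k₂.1.isUniversalQuotient
      (IsCanonicalDecomp.comp_obj_eq_iff hX₁ hX₂ hX₃ (hκ₁.1.comp hμ₂.1)
        (hκ₁.2.1.comp hμ₂.2.1) h₁ h₂ k₁ k₂)
    refine ⟨e, e', he, he', congrArg (μ₁ ⋙ ·) heq, hα.cancel ?_⟩
    calc (α₁ ⋙ α₂) ⋙ e ⋙ δ₂ ⋙ δ₁ ⋙ κ₃
        = ((α₁ ⋙ α₂) ⋙ e) ⋙ δ₂ ⋙ δ₁ ⋙ κ₃ := rfl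
      _ = (γ₂ ⋙ δ₂) ⋙ δ₁ ⋙ κ₃ := by rw [heq]; rfl
      _ = κ₁ ⋙ μ₂ ⋙ (γ₁ ⋙ δ₁) ⋙ κ₃ := by rw [k₂.2]; rfl
      _ = (κ₁ ⋙ μ₂) ⋙ (κ₂ ⋙ μ₃) ⋙ κ₃ := by rw [k₁.2]; rfl
      _ = α₁ ⋙ (β₁ ⋙ κ₂ ⋙ μ₃) ⋙ κ₃ := by rw [← h₁.2]; rfl
      _ = (α₁ ⋙ α₂) ⋙ β₂ ⋙ κ₃ := by rw [← h₂.2]; rfl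
  · intro A B X P _ _ _ _ _ _ _ _ μ κ _ hκ α β h
    have hα := h.1.isUniversalQuotient
    obtain ⟨e, e', he, he', heq⟩ := hα.exists_iso (IsUniversalQuotient.id X) fun Y Z => by
      refine (h.obj_eq_iff Y Z).trans ⟨?_, Or.inl⟩
      rintro (hYZ | ⟨hYZ, hY, hZ⟩)
      · exact hYZ
      · exact (hκ.2.2 (κ.obj Z)).unique ⟨hYZ, hY⟩ ⟨rfl, hZ⟩
    refine ⟨e, e', he, he', congrArg (μ ⋙ ·) heq, hα.cancel ?_⟩
    rw [← Functor.assoc, heq, h.2, Functor.id_comp]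
  · intro A B X Q _ _ _ _ hA _ _ _ μ κ hμ _ α β h
    have hα := h.1.isUniversalQuotient
    obtain ⟨-, -, r, -, hr⟩ := hμ
    have hvertex (Y : A) : IsVertexOver μ Y := fun _ _ hf => hr.isId_of_contracts hA hf
    obtain ⟨e, e', he, he', heq⟩ := hα.exists_iso hr.isUniversalQuotient fun Y Z => by
      refine (h.obj_eq_iff Y Z).trans ⟨?_, fun hYZ => Or.inr ⟨hYZ, hvertex Y, hvertex Z⟩⟩
      rintro (rfl | hYZ)
      · rfl
      · exact hYZ.1
    refine ⟨e, e', he, he', heq, hα.cancel ?_⟩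
    rw [← Functor.assoc, heq, ← Functor.assoc, h.2]
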